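/- Let n be a positive even integer. Then there exist continuous functions x_1, …, x_{n/2} : [0,∞) → ℝ with x_k(0) = π/2 for each k, such that for every t > 0 one has 0 < x_1(t) < … < x_{n/2}(t) < π/2 and {x ∈ (0,π/2] : Z_{n,t}(x) = 0} = {x_1(t), …, x_{n/2}(t)}; moreover, each x_k is strictly decreasing on [0,∞), and lim_{t→∞} x_k(t) = (2k−1)π/(2n). -/

import Mathlib

open scoped Real

noncomputable def spin (b : Bool) : ℝ := if b then 1 else -1

/-- The Curie-Weiss partition function `Z_{n,t}(x)`. -/
noncomputable def CWZ (n : ℕ) (t x : ℂ) : ℂ :=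
  ∑ σ : Fin n → Bool, Complex.exp
    (t * ((∑ j, spin (σ j) : ℝ) : ℂ) ^ 2
      + Complex.I * x * ((∑ j, spin (σ j) : ℝ) : ℂ))

open Polynomial Finset

/-- The Lee-Yang polynomial of the complete graph on `n` vertices. -/
noncomputable def leeYang (n : ℕ) (q : ℝ) : ℂ[X] :=
  ∑ k ∈ range (n + 1), C ((n.choose k : ℂ) * (q : ℂ) ^ (k * (n - k))) * X ^ k

/-- The Lee-Yang polynomial on the unit circle, as a real trigonometric polynomial. -/
noncomputable def leeYangTrig (n : ℕ) (q x : ℝ) : ℝ :=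
  ∑ k ∈ range (n + 1), (n.choose k : ℝ) * q ^ (k * (n - k)) * Real.cos (((n : ℝ) - 2 * k) * x)

theorem leeYang_eval (n : ℕ) (q : ℝ) (z : ℂ) :
    (leeYang n q).eval z =
      ∑ k ∈ range (n + 1), (n.choose k : ℂ) * (q : ℂ) ^ (k * (n - k)) * z ^ k := by
  simp [leeYang, eval_finsetSum]

theorem leeYang_coeff (n : ℕ) (q : ℝ) (j : ℕ) :
    (leeYang n q).coeff j =
      if j < n + 1 then (n.choose j : ℂ) * (q : ℂ) ^ (j * (n - j)) else 0 := by
  simp only [leeYang, finsetSum_coeff, coeff_C_mul, coeff_X_pow, mul_ite, mul_one, mul_zero,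
    Finset.sum_ite_eq, Finset.mem_range]

theorem leeYang_natDegree (n : ℕ) (q : ℝ) : (leeYang n q).natDegree = n := by
  refine natDegree_eq_of_le_of_coeff_ne_zero ?_ ?_
  · rw [natDegree_le_iff_coeff_eq_zero]
    intro j hj
    rw [leeYang_coeff, if_neg (by lia)]
  · simp [leeYang_coeff]

theorem leeYang_monic (n : ℕ) (q : ℝ) : (leeYang n q).Monic := by
  rw [Monic, leadingCoeff, leeYang_natDegree, leeYang_coeff]
  simp

theorem leeYang_succ_eval {n : ℕ} {q : ℝ} (hq : q ≠ 0) (z : ℂ) :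
    (leeYang (n + 1) q).eval z =
      (leeYang n q).eval (q * z) + z * (q ^ n * (leeYang n q).eval (z / q)) := by
  have hq' : (q : ℂ) ≠ 0 := by exact_mod_cast hq
  have hlow : ∀ k ∈ range (n + 1),
      (n.choose k : ℂ) * (q : ℂ) ^ (k * (n - k)) * (q * z) ^ k =
        (n.choose k : ℂ) * (q : ℂ) ^ (k * (n + 1 - k)) * z ^ k := by
    intro k hk
    have hk' : k ≤ n := by simpa [Nat.lt_succ_iff] using hk
    obtain ⟨j, rfl⟩ := Nat.exists_eq_add_of_le hk'
    rw [show k + j - k = j by lia, show k + j + 1 - k = j + 1 by lia]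
    ring
  have hhigh : ∀ k ∈ range (n + 1),
      z * (q ^ n * ((n.choose k : ℂ) * (q : ℂ) ^ (k * (n - k)) * (z / q) ^ k)) =
        (n.choose k : ℂ) * (q : ℂ) ^ ((k + 1) * (n + 1 - (k + 1))) * z ^ (k + 1) := by
    intro k hk
    have hk' : k ≤ n := by simpa [Nat.lt_succ_iff] using hk
    obtain ⟨j, rfl⟩ := Nat.exists_eq_add_of_le hk'
    rw [show k + j - k = j by lia, show k + j + 1 - (k + 1) = j by lia, div_pow]
    field_simp
    ring
  simp only [leeYang_eval, Finset.mul_sum]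
  rw [Finset.sum_congr rfl hlow, Finset.sum_congr rfl hhigh, Finset.sum_range_succ']
  have hpascal : ∀ k ∈ range (n + 1), ((n + 1).choose (k + 1) : ℂ) *
      (q : ℂ) ^ ((k + 1) * (n + 1 - (k + 1))) * z ^ (k + 1) =
        (n.choose k : ℂ) * (q : ℂ) ^ ((k + 1) * (n + 1 - (k + 1))) * z ^ (k + 1) +
        (n.choose (k + 1) : ℂ) * (q : ℂ) ^ ((k + 1) * (n + 1 - (k + 1))) * z ^ (k + 1) := by
    intro k _
    rw [Nat.choose_succ_succ]
    push_cast
    ring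
  rw [Finset.sum_congr rfl hpascal, Finset.sum_add_distrib]
  rw [Finset.sum_range_succ' (fun k => (n.choose k : ℂ) * (q : ℂ) ^ (k * (n + 1 - k)) * z ^ k),
    Finset.sum_range_succ (fun k => (n.choose (k + 1) : ℂ) *
      (q : ℂ) ^ ((k + 1) * (n + 1 - (k + 1))) * z ^ (k + 1))]
  simp
  ring

theorem leeYang_succ_derivative_eval {n : ℕ} {q : ℝ} (hq : q ≠ 0) (z : ℂ) :
    (leeYang (n + 1) q).derivative.eval z =
      (n + 1) * (q ^ n * (leeYang n q).eval (z / q)) := by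
  have hq' : (q : ℂ) ≠ 0 := by exact_mod_cast hq
  rw [leeYang_eval]
  simp only [leeYang, derivative_sum, eval_finsetSum, derivative_C_mul, derivative_X_pow,
    eval_mul, eval_C, eval_pow, eval_X, Finset.mul_sum]
  rw [Finset.sum_range_succ']
  simp only [Nat.cast_zero, zero_mul, mul_zero, add_zero]
  refine Finset.sum_congr rfl fun k hk => ?_
  have hk' : k ≤ n := by simpa [Nat.lt_succ_iff] using hk
  have hc : ((n + 1).choose (k + 1) : ℂ) * (k + 1) = (n + 1) * n.choose k := by
    exact_mod_cast (Nat.add_one_mul_choose_eq n k).symm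
  obtain ⟨j, rfl⟩ := Nat.exists_eq_add_of_le hk'
  rw [show k + j - k = j by lia, show k + j + 1 - (k + 1) = j by lia, div_pow,
    show k + 1 - 1 = k by lia]
  field_simp
  push_cast at hc ⊢
  linear_combination ((q : ℂ) ^ ((k + 1) * j) * z ^ k * q ^ k) * hc

theorem leeYang_zero_eval {n : ℕ} (hn : n ≠ 0) (z : ℂ) :
    (leeYang n 0).eval z = z ^ n + 1 := by
  obtain ⟨n, rfl⟩ := Nat.exists_eq_succ_of_ne_zero hn
  rw [leeYang_eval, Finset.sum_range_succ, Finset.sum_range_succ', Finset.sum_eq_zero]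
  · simp
    ring
  · intro k hk
    have : (k + 1) * (n.succ - (k + 1)) ≠ 0 := by
      have := Finset.mem_range.1 hk
      exact mul_ne_zero (by lia) (by lia)
    rw [Complex.ofReal_zero, zero_pow this, mul_zero, zero_mul]

theorem norm_sub_mul_le_norm_mul_sub {q : ℝ} (hq : |q| ≤ 1) {z ζ : ℂ} (hζ : ‖ζ‖ = 1)
    (hz : ‖z‖ ≤ 1) : ‖z - q * ζ‖ ≤ ‖q * z - ζ‖ := by
  have hq2 : q ^ 2 ≤ 1 := (sq_le_one_iff_abs_le_one q).2 hq
  have hz2 : ‖z‖ ^ 2 ≤ 1 := pow_le_one₀ (norm_nonneg z) hz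
  have hζ2 : ‖ζ‖ ^ 2 = 1 := by rw [hζ, one_pow]
  rw [← sq_le_sq₀ (norm_nonneg _) (norm_nonneg _)]
  rw [← Complex.normSq_eq_norm_sq, Complex.normSq_apply] at hz2 hζ2 ⊢
  rw [← Complex.normSq_eq_norm_sq, Complex.normSq_apply]
  simp only [Complex.sub_re, Complex.sub_im, Complex.re_ofReal_mul, Complex.im_ofReal_mul]
  nlinarith [mul_nonneg (sub_nonneg.2 hq2) (sub_nonneg.2 hz2)]

theorem norm_mul_sub_le_norm_sub_mul {q : ℝ} (hq : |q| ≤ 1) {z ζ : ℂ} (hζ : ‖ζ‖ = 1)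
    (hz : 1 ≤ ‖z‖) : ‖q * z - ζ‖ ≤ ‖z - q * ζ‖ := by
  have hq2 : q ^ 2 ≤ 1 := (sq_le_one_iff_abs_le_one q).2 hq
  have hz2 : 1 ≤ ‖z‖ ^ 2 := one_le_pow₀ hz
  have hζ2 : ‖ζ‖ ^ 2 = 1 := by rw [hζ, one_pow]
  rw [← sq_le_sq₀ (norm_nonneg _) (norm_nonneg _)]
  rw [← Complex.normSq_eq_norm_sq, Complex.normSq_apply] at hz2 hζ2 ⊢
  rw [← Complex.normSq_eq_norm_sq, Complex.normSq_apply]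
  simp only [Complex.sub_re, Complex.sub_im, Complex.re_ofReal_mul, Complex.im_ofReal_mul]
  nlinarith [mul_nonneg (sub_nonneg.2 hq2) (sub_nonneg.2 hz2)]

theorem leeYang_eval_eq_prod (n : ℕ) (q : ℝ) (z : ℂ) :
    (leeYang n q).eval z = ((leeYang n q).roots.map fun ζ => z - ζ).prod :=
  (IsAlgClosed.splits _).eval_eq_prod_roots_of_monic (leeYang_monic n q) z

theorem leeYang_card_roots (n : ℕ) (q : ℝ) : (leeYang n q).roots.card = n := by
  rw [← (IsAlgClosed.splits (leeYang n q)).natDegree_eq_card_roots, leeYang_natDegree]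

theorem pow_mul_leeYang_eval_div {n : ℕ} {q : ℝ} (hq : q ≠ 0) (z : ℂ) :
    q ^ n * (leeYang n q).eval (z / q) =
      ((leeYang n q).roots.map fun ζ => z - q * ζ).prod := by
  have hq' : (q : ℂ) ≠ 0 := by exact_mod_cast hq
  have hpow : (q : ℂ) ^ n = ((leeYang n q).roots.map fun _ => (q : ℂ)).prod := by
    rw [Multiset.map_const', Multiset.prod_replicate, leeYang_card_roots]
  rw [leeYang_eval_eq_prod, hpow, ← Multiset.prod_map_mul]
  congr 1
  refine Multiset.map_congr rfl fun ζ _ => ?_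
  field_simp

theorem norm_multiset_prod_map (s : Multiset ℂ) (f : ℂ → ℂ) :
    ‖(s.map f).prod‖ = (s.map fun ζ => ‖f ζ‖).prod := by
  induction s using Multiset.induction_on with
  | empty => simp
  | cons a s ih => simp [ih]

/-- The Lee-Yang circle theorem for the complete graph, away from `q = 0`. -/
theorem norm_eq_one_of_leeYang_eval_eq_zero_of_ne {q : ℝ} (hq0 : q ≠ 0) (hq : |q| < 1) (n : ℕ) :
    ∀ z : ℂ, (leeYang n q).eval z = 0 → ‖z‖ = 1 := by
  induction n with
  | zero => intro z hz; simp [leeYang_eval] at hz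
  | succ n ih =>
    intro z hz
    rw [leeYang_succ_eval hq0, add_eq_zero_iff_eq_neg] at hz
    have hnorm := congrArg norm hz
    rw [norm_neg, norm_mul] at hnorm
    have hroot : ∀ ζ ∈ (leeYang n q).roots, ‖ζ‖ = 1 := fun ζ hζ => ih ζ (isRoot_of_mem_roots hζ)
    have hq' : 0 < |q| := abs_pos.2 hq0
    rcases lt_trichotomy ‖z‖ 1 with hz1 | hz1 | hz1
    · have hpos : 0 < ‖(leeYang n q).eval (q * z)‖ := by
        rw [norm_pos_iff]
        intro h0
        have := ih _ h0
        rw [norm_mul, Complex.norm_real, Real.norm_eq_abs] at this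
        nlinarith [norm_nonneg z]
      have hle : ‖(q : ℂ) ^ n * (leeYang n q).eval (z / q)‖ ≤ ‖(leeYang n q).eval (q * z)‖ := by
        rw [pow_mul_leeYang_eval_div hq0, leeYang_eval_eq_prod, norm_multiset_prod_map,
          norm_multiset_prod_map]
        exact Multiset.prod_map_le_prod_map₀ _ _ (fun _ _ => norm_nonneg _) fun ζ hζ =>
          norm_sub_mul_le_norm_mul_sub hq.le (hroot ζ hζ) hz1.le
      nlinarith [norm_nonneg z, norm_nonneg ((q : ℂ) ^ n * (leeYang n q).eval (z / q))]
    · exact hz1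
    · have hpos : 0 < ‖(q : ℂ) ^ n * (leeYang n q).eval (z / q)‖ := by
        rw [norm_pos_iff]
        refine mul_ne_zero (pow_ne_zero _ (by exact_mod_cast hq0)) fun h0 => ?_
        have := ih _ h0
        rw [norm_div, Complex.norm_real, Real.norm_eq_abs, div_eq_one_iff_eq hq'.ne'] at this
        linarith
      have hle : ‖(leeYang n q).eval (q * z)‖ ≤ ‖(q : ℂ) ^ n * (leeYang n q).eval (z / q)‖ := by
        rw [pow_mul_leeYang_eval_div hq0, leeYang_eval_eq_prod, norm_multiset_prod_map,
          norm_multiset_prod_map]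
        exact Multiset.prod_map_le_prod_map₀ _ _ (fun _ _ => norm_nonneg _) fun ζ hζ =>
          norm_mul_sub_le_norm_sub_mul hq.le (hroot ζ hζ) hz1.le
      nlinarith

/-- The Lee-Yang circle theorem for the complete graph. -/
theorem norm_eq_one_of_leeYang_eval_eq_zero {n : ℕ} {q : ℝ} (hq : |q| < 1) {z : ℂ}
    (hz : (leeYang n q).eval z = 0) : ‖z‖ = 1 := by
  rcases eq_or_ne q 0 with rfl | hq0
  · rcases eq_or_ne n 0 with rfl | hn
    · simp [leeYang_eval] at hz
    · rw [leeYang_zero_eval hn, add_eq_zero_iff_eq_neg] at hz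
      have hpow : ‖z‖ ^ n = 1 := by rw [← norm_pow, hz, norm_neg, norm_one]
      exact (pow_eq_one_iff_of_nonneg (norm_nonneg z) hn).1 hpow
  · exact norm_eq_one_of_leeYang_eval_eq_zero_of_ne hq0 hq n z hz

theorem leeYang_derivative_eval_ne_zero {n : ℕ} {q : ℝ} (hq : |q| < 1) {z : ℂ}
    (hz : (leeYang n q).eval z = 0) : (leeYang n q).derivative.eval z ≠ 0 := by
  have hz1 := norm_eq_one_of_leeYang_eval_eq_zero hq hz
  rcases n with _ | n
  · simp [leeYang_eval] at hz
  rcases eq_or_ne q 0 with rfl | hq0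
  · have hpoly : leeYang (n + 1) 0 = X ^ (n + 1) + 1 :=
      Polynomial.funext fun w => by simp [leeYang_zero_eval]
    rw [hpoly]
    have hz0 : z ≠ 0 := by rintro rfl; simp at hz1
    have : ((n : ℂ) + 1) ≠ 0 := by exact_mod_cast n.succ_ne_zero
    simp [hz0, this]
  · rw [leeYang_succ_derivative_eval hq0]
    refine mul_ne_zero (by exact_mod_cast n.succ_ne_zero)
      (mul_ne_zero (pow_ne_zero _ (by exact_mod_cast hq0)) fun h0 => ?_)
    have := norm_eq_one_of_leeYang_eval_eq_zero hq h0
    rw [norm_div, Complex.norm_real, Real.norm_eq_abs, hz1,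
      div_eq_one_iff_eq (abs_pos.2 hq0).ne'] at this
    linarith

theorem leeYang_roots_nodup {n : ℕ} {q : ℝ} (hq : |q| < 1) : (leeYang n q).roots.Nodup := by
  rw [Multiset.nodup_iff_count_le_one]
  intro z
  by_contra! h
  rw [count_roots, one_lt_rootMultiplicity_iff_isRoot (leeYang_monic n q).ne_zero] at h
  exact leeYang_derivative_eval_ne_zero hq h.1 h.2

theorem sum_range_symm_eq_sum_cos {n : ℕ} (a : ℕ → ℝ) (ha : ∀ k ≤ n, a (n - k) = a k) (x : ℝ) :
    ∑ k ∈ range (n + 1), (a k : ℂ) * Complex.exp (((2 * k - n : ℝ) * x : ℝ) * Complex.I) =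
      ((∑ k ∈ range (n + 1), a k * Real.cos (((n : ℝ) - 2 * k) * x) : ℝ) : ℂ) := by
  have hrefl := Finset.sum_range_reflect
    (fun k => (a k : ℂ) * Complex.exp (((2 * k - n : ℝ) * x : ℝ) * Complex.I)) (n + 1)
  have hflip : ∀ k ∈ range (n + 1), (a (n + 1 - 1 - k) : ℂ) *
      Complex.exp (((2 * (n + 1 - 1 - k : ℕ) - n : ℝ) * x : ℝ) * Complex.I) =
        (a k : ℂ) * Complex.exp (-((((2 * k - n : ℝ) * x : ℝ) * Complex.I))) := by
    intro k hk
    have hk' : k ≤ n := by simpa [Nat.lt_succ_iff] using hk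
    rw [Nat.add_sub_cancel, ha k hk', Nat.cast_sub hk']
    congr 2
    push_cast
    ring
  rw [Finset.sum_congr rfl hflip] at hrefl
  have hcos : ∀ k ∈ range (n + 1), ((a k * Real.cos (((n : ℝ) - 2 * k) * x) : ℝ) : ℂ) =
      ((a k : ℂ) * Complex.exp (((2 * k - n : ℝ) * x : ℝ) * Complex.I) +
        (a k : ℂ) * Complex.exp (-((((2 * k - n : ℝ) * x : ℝ) * Complex.I)))) / 2 := by
    intro k _
    rw [show ((n : ℝ) - 2 * k) * x = -((2 * k - n) * x) by ring, Real.cos_neg,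
      Complex.ofReal_mul, Complex.ofReal_cos, Complex.cos, neg_mul]
    ring
  rw [Complex.ofReal_sum, Finset.sum_congr rfl hcos, ← Finset.sum_div, Finset.sum_add_distrib,
    hrefl, add_self_div_two]

theorem leeYangTrig_eq (n : ℕ) (q x : ℝ) :
    (leeYangTrig n q x : ℂ) =
      Complex.exp (-(n * x * Complex.I)) * (leeYang n q).eval (Complex.exp (2 * x * Complex.I)) := by
  rw [leeYangTrig, ← sum_range_symm_eq_sum_cos (fun k => (n.choose k : ℝ) * q ^ (k * (n - k))),
    leeYang_eval, Finset.mul_sum]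
  · refine Finset.sum_congr rfl fun k _ => ?_
    rw [← Complex.exp_nat_mul, mul_left_comm, ← Complex.exp_add]
    push_cast
    congr 2
    ring
  · intro k hk
    rw [Nat.choose_symm hk, Nat.sub_sub_self hk, mul_comm k]

theorem leeYangTrig_eq_zero_iff {n : ℕ} {q x : ℝ} :
    leeYangTrig n q x = 0 ↔ (leeYang n q).eval (Complex.exp (2 * x * Complex.I)) = 0 := by
  rw [← Complex.ofReal_eq_zero, leeYangTrig_eq]
  simp

theorem continuous_leeYangTrig (n : ℕ) : Continuous fun p : ℝ × ℝ => leeYangTrig n p.1 p.2 := by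
  unfold leeYangTrig
  fun_prop

theorem hasDerivAt_leeYangTrig_left (n : ℕ) (q x : ℝ) :
    HasDerivAt (fun q => leeYangTrig (n + 2) q x)
      ((n + 2) * (n + 1) * (q ^ n * leeYangTrig n q x)) q := by
  have hsum : HasDerivAt (fun q => leeYangTrig (n + 2) q x)
      (∑ k ∈ range (n + 2 + 1), ((n + 2).choose k : ℝ) *
        ((k * (n + 2 - k) : ℕ) * q ^ (k * (n + 2 - k) - 1)) *
          Real.cos (((n + 2 : ℕ) - 2 * k : ℝ) * x)) q := by
    unfold leeYangTrig
    exact HasDerivAt.fun_sum fun k _ => ((hasDerivAt_pow _ q).const_mul _).mul_const _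
  convert hsum using 1
  rw [Finset.sum_range_succ, Finset.sum_range_succ', leeYangTrig, Nat.sub_self, mul_zero,
    zero_mul, Nat.cast_zero, zero_mul, mul_zero, zero_mul, add_zero, mul_zero, zero_mul, add_zero,
    Finset.mul_sum,
    Finset.mul_sum]
  refine Finset.sum_congr rfl fun k hk => ?_
  have hk' : k ≤ n := by simpa [Nat.lt_succ_iff] using hk
  obtain ⟨j, rfl⟩ := Nat.exists_eq_add_of_le hk'
  have hchoose : (((k + j + 2).choose (k + 1) : ℕ) : ℝ) * ((k + 1) * (j + 1)) =
      (k + j + 2) * (k + j + 1) * (k + j).choose k := by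
    have h1 := Nat.add_one_mul_choose_eq (k + j + 1) k
    have h2 := Nat.add_one_mul_choose_eq (k + j) j
    rw [← Nat.choose_symm_of_eq_add (show k + j + 1 = k + (j + 1) by lia),
      ← Nat.choose_symm_of_eq_add (show k + j = k + j by rfl)] at h2
    have h1' : ((k + j + 1 + 1 : ℕ) : ℝ) * (k + j + 1).choose k =
        (k + j + 1 + 1).choose (k + 1) * (k + 1 : ℕ) := by exact_mod_cast h1
    have h2' : ((k + j + 1 : ℕ) : ℝ) * (k + j).choose k =
        (k + j + 1).choose k * (j + 1 : ℕ) := by exact_mod_cast h2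
    push_cast at h1' h2'
    linear_combination (-(j + 1 : ℝ)) * h1' - (k + j + 2 : ℝ) * h2'
  rw [show k + j - k = j by lia, show k + j + 2 - (k + 1) = j + 1 by lia,
    show (k + 1) * (j + 1) - 1 = (k + j) + k * j by
      rw [show (k + 1) * (j + 1) = (k + j) + k * j + 1 by ring]; rfl, pow_add,
    show ((k + j + 2 : ℕ) - 2 * (k + 1 : ℕ) : ℝ) = ((k + j : ℕ) : ℝ) - 2 * k by
      push_cast; ring]
  push_cast at hchoose ⊢
  linear_combination (-(q ^ (k + j) * q ^ (k * j) * Real.cos ((k + j - 2 * k) * x))) * hchoose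

theorem exists_hasDerivAt_leeYangTrig_right {n : ℕ} {q x : ℝ} (hq : |q| < 1)
    (hx : leeYangTrig n q x = 0) : ∃ d ≠ 0, HasDerivAt (leeYangTrig n q) d x := by
  have hd : DifferentiableAt ℝ (leeYangTrig n q) x := by
    unfold leeYangTrig
    fun_prop
  refine ⟨_, fun h0 => ?_, hd.hasDerivAt⟩
  have hz := leeYangTrig_eq_zero_iff.1 hx
  have hderiv := hd.hasDerivAt.ofReal_comp
  have hinner : HasDerivAt (fun y : ℝ => Complex.exp (2 * y * Complex.I))
      (Complex.exp (2 * x * Complex.I) * (2 * Complex.I)) x := by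
    have h1 : HasDerivAt (fun y : ℝ => (2 * y * Complex.I : ℂ)) (2 * Complex.I) x := by
      simpa using ((Complex.ofRealCLM.hasDerivAt (x := x)).const_mul (2 : ℂ)).mul_const Complex.I
    exact h1.cexp
  have hpoly := ((leeYang n q).hasDerivAt (Complex.exp (2 * x * Complex.I))).comp x hinner
  have houter : HasDerivAt (fun y : ℝ => Complex.exp (-(n * y * Complex.I)))
      (Complex.exp (-(n * x * Complex.I)) * (-(n * Complex.I))) x := by
    have h1 : HasDerivAt (fun y : ℝ => (-(n * y * Complex.I) : ℂ)) (-(n * Complex.I)) x := by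
      simpa using (((Complex.ofRealCLM.hasDerivAt (x := x)).const_mul (n : ℂ)).mul_const
        Complex.I).fun_neg
    exact h1.cexp
  have heq := hderiv.unique ((houter.mul hpoly).congr_of_eventuallyEq
    (Filter.Eventually.of_forall fun y => leeYangTrig_eq n q y))
  rw [h0, Function.comp_apply, hz] at heq
  simp [leeYang_derivative_eval_ne_zero hq hz] at heq

theorem leeYangTrig_reflect (m : ℕ) (q : ℝ) (l : ℤ) (x : ℝ) :
    leeYangTrig (2 * m) q (l * π - x) = leeYangTrig (2 * m) q x := by
  unfold leeYangTrig
  refine Finset.sum_congr rfl fun k _ => ?_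
  rw [show (((2 * m : ℕ) : ℝ) - 2 * k) * (l * π - x) =
    (((m - k) * l : ℤ) : ℝ) * (2 * π) - (((2 * m : ℕ) : ℝ) - 2 * k) * x by push_cast; ring,
    Real.cos_int_mul_two_pi_sub]

theorem leeYangTrig_int_mul_pi_div_two_ne_zero {m : ℕ} {q : ℝ} (hq : |q| < 1) (l : ℤ) :
    leeYangTrig (2 * m) q (l * π / 2) ≠ 0 := by
  intro h0
  obtain ⟨d, hd, hderiv⟩ := exists_hasDerivAt_leeYangTrig_right hq h0
  have hmid : (l * π - l * π / 2 : ℝ) = l * π / 2 := by ring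
  have hcomp : HasDerivAt (fun x => leeYangTrig (2 * m) q (l * π - x)) (-d) (l * π / 2) := by
    rw [← hmid] at hderiv
    simpa using hderiv.comp_const_sub (l * π) (l * π / 2)
  simp only [leeYangTrig_reflect] at hcomp
  have := hderiv.unique hcomp
  exact hd (by linarith)

theorem leeYang_eval_conj (n : ℕ) (q : ℝ) (z : ℂ) :
    (leeYang n q).eval (starRingEnd ℂ z) = starRingEnd ℂ ((leeYang n q).eval z) := by
  simp [leeYang_eval, map_sum]

theorem im_ne_zero_of_leeYang_eval_eq_zero {m : ℕ} {q : ℝ} (hq : |q| < 1) {z : ℂ}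
    (hz : (leeYang (2 * m) q).eval z = 0) : z.im ≠ 0 := by
  intro him
  have hz1 := norm_eq_one_of_leeYang_eval_eq_zero hq hz
  have hre : z = (z.re : ℂ) := Complex.ext rfl (by simpa using him)
  rw [hre, Complex.norm_real, Real.norm_eq_abs] at hz1
  rcases eq_or_eq_neg_of_abs_eq hz1 with h | h
  · refine leeYangTrig_int_mul_pi_div_two_ne_zero (m := m) hq 0 (leeYangTrig_eq_zero_iff.2 ?_)
    rw [hre, h] at hz
    simpa using hz
  · refine leeYangTrig_int_mul_pi_div_two_ne_zero (m := m) hq 1 (leeYangTrig_eq_zero_iff.2 ?_)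
    rw [hre, h] at hz
    rw [show (2 * ((((1 : ℤ) : ℝ) * π / 2 : ℝ) : ℂ) * Complex.I) = π * Complex.I by
      push_cast; ring, Complex.exp_pi_mul_I]
    simpa using hz

theorem card_leeYang_roots_upper {m : ℕ} {q : ℝ} (hq : |q| < 1) :
    ((leeYang (2 * m) q).roots.toFinset.filter fun z => 0 < z.im).card = m := by
  set R := (leeYang (2 * m) q).roots.toFinset with hR
  have hmem : ∀ z, z ∈ R ↔ (leeYang (2 * m) q).eval z = 0 := fun z => by
    rw [hR, Multiset.mem_toFinset, mem_roots (leeYang_monic _ _).ne_zero, IsRoot]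
  have hcard : R.card = 2 * m := by
    rw [hR, Multiset.toFinset_card_of_nodup (leeYang_roots_nodup hq), leeYang_card_roots]
  have hconj : ∀ z ∈ R, starRingEnd ℂ z ∈ R := fun z hz => by
    rw [hmem, leeYang_eval_conj, (hmem z).1 hz, map_zero]
  have hbij : (R.filter fun z => 0 < z.im).card = (R.filter fun z => ¬ 0 < z.im).card := by
    refine Finset.card_nbij' (starRingEnd ℂ) (starRingEnd ℂ) ?_ ?_
      (fun z _ => Complex.conj_conj z) (fun z _ => Complex.conj_conj z)
    · intro z hz
      rw [Finset.mem_coe, Finset.mem_filter] at hz ⊢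
      exact ⟨hconj z hz.1, by rw [Complex.conj_im]; linarith [hz.2]⟩
    · intro z hz
      rw [Finset.mem_coe, Finset.mem_filter] at hz ⊢
      have := im_ne_zero_of_leeYang_eval_eq_zero hq ((hmem z).1 hz.1)
      refine ⟨hconj z hz.1, ?_⟩
      rw [Complex.conj_im, Left.neg_pos_iff]
      exact lt_of_le_of_ne (not_lt.1 hz.2) this
  have := Finset.card_filter_add_card_filter_not (s := R) fun z => 0 < z.im
  lia

theorem exists_finset_leeYangTrig_zeros {m : ℕ} {q : ℝ} (hq : |q| < 1) :
    ∃ s : Finset ℝ, s.card = m ∧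
      ∀ x, x ∈ s ↔ x ∈ Set.Ioo 0 (π / 2) ∧ leeYangTrig (2 * m) q x = 0 := by
  have hmem : ∀ z, z ∈ (leeYang (2 * m) q).roots.toFinset ↔ (leeYang (2 * m) q).eval z = 0 :=
    fun z => by rw [Multiset.mem_toFinset, mem_roots (leeYang_monic _ _).ne_zero, IsRoot]
  have hpolar : ∀ z : ℂ, (leeYang (2 * m) q).eval z = 0 →
      Complex.exp (2 * (z.arg / 2 : ℝ) * Complex.I) = z := fun z hz => by
    have := Complex.norm_mul_exp_arg_mul_I z
    rw [norm_eq_one_of_leeYang_eval_eq_zero hq hz, Complex.ofReal_one, one_mul] at this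
    rw [Complex.ofReal_div, Complex.ofReal_ofNat, mul_div_cancel₀ _ (two_ne_zero), this]
  refine ⟨((leeYang (2 * m) q).roots.toFinset.filter fun z => 0 < z.im).image
    fun z => z.arg / 2, ?_, fun x => ?_⟩
  · rw [Finset.card_image_of_injOn, card_leeYang_roots_upper hq]
    intro z hz w hw hzw
    rw [Finset.mem_coe, Finset.mem_filter, hmem] at hz hw
    rw [← hpolar z hz.1, ← hpolar w hw.1]
    simp only at hzw
    rw [hzw]
  · simp only [Finset.mem_image, Finset.mem_filter, hmem]
    constructor
    · rintro ⟨z, ⟨hz, him⟩, rfl⟩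
      have hpos : 0 < z.arg := lt_of_le_of_ne (Complex.arg_nonneg_iff.2 him.le) fun h => by
        exact him.ne' (Complex.arg_eq_zero_iff.1 h.symm).2
      have hlt : z.arg < π := lt_of_le_of_ne (Complex.arg_le_pi z) fun h =>
        him.ne' (Complex.arg_eq_pi_iff.1 h).2
      exact ⟨⟨by linarith, by linarith⟩, leeYangTrig_eq_zero_iff.2 (by rwa [hpolar z hz])⟩
    · rintro ⟨⟨hx0, hx1⟩, hx⟩
      have hexp : Complex.exp (2 * x * Complex.I) = Complex.exp ((2 * x : ℝ) * Complex.I) := by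
        push_cast; rfl
      refine ⟨_, ⟨leeYangTrig_eq_zero_iff.1 hx, ?_⟩, ?_⟩
      · rw [hexp, Complex.exp_ofReal_mul_I_im]
        exact Real.sin_pos_of_pos_of_lt_pi (by linarith) (by linarith)
      · rw [hexp, Complex.arg_exp_mul_I, toIocMod_eq_self _ |>.2]
        · ring
        · constructor <;> linarith

theorem exists_Ioo_eq_zero_of_mul_neg {f : ℝ → ℝ} (hf : Continuous f) {a b : ℝ} (hab : a < b)
    (hneg : f a * f b < 0) : ∃ c ∈ Set.Ioo a b, f c = 0 := by
  rcases mul_neg_iff.1 hneg with ⟨h1, h2⟩ | ⟨h1, h2⟩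
  · exact intermediate_value_Ioo' hab.le hf.continuousOn ⟨h2, h1⟩
  · exact intermediate_value_Ioo hab.le hf.continuousOn ⟨h1, h2⟩

theorem ne_of_hasDerivAt_even_pow_mul_pos {f g : ℝ → ℝ} {n : ℕ} (hn : Even n)
    (hf : ∀ q, HasDerivAt f (q ^ n * g q) q) {a b : ℝ} (hab : a < b)
    (hg : ∀ c ∈ Set.Ioo a b, 0 < g c) : f a ≠ f b := by
  intro heq
  have hmono : MonotoneOn f (Set.Icc a b) := by
    refine monotoneOn_of_deriv_nonneg (convex_Icc a b)
      (fun q _ => (hf q).continuousAt.continuousWithinAt)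
      (fun q _ => (hf q).differentiableAt.differentiableWithinAt) fun q hq => ?_
    rw [interior_Icc] at hq
    rw [(hf q).deriv]
    exact mul_nonneg (hn.pow_nonneg q) (hg q hq).le
  obtain ⟨c, hc, hc0⟩ : ∃ c ∈ Set.Ioo a b, c ≠ 0 :=
    ((Set.Ioo_infinite hab).sdiff (Set.finite_singleton 0)).nonempty
  have hconst : f =ᶠ[nhds c] fun _ => f a := by
    filter_upwards [Ioo_mem_nhds hc.1 hc.2] with q hq
    refine le_antisymm ?_ (hmono (Set.left_mem_Icc.2 hab.le) (Set.Ioo_subset_Icc_self hq) hq.1.le)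
    rw [heq]
    exact hmono (Set.Ioo_subset_Icc_self hq) (Set.right_mem_Icc.2 hab.le) hq.2.le
  have := (hf c).unique ((hasDerivAt_const c (f a)).congr_of_eventuallyEq hconst)
  exact mul_ne_zero (pow_ne_zero n hc0) (hg c hc).ne' this

/-- Rolle's theorem when the derivative is `g` up to an even power, which does not change sign. -/
theorem exists_eq_zero_of_hasDerivAt_even_pow_mul {f g : ℝ → ℝ} {n : ℕ} (hn : Even n)
    (hf : ∀ q, HasDerivAt f (q ^ n * g q) q) (hg : Continuous g) {a b : ℝ} (hab : a < b)
    (heq : f a = f b) : ∃ c ∈ Set.Ioo a b, g c = 0 := by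
  by_contra! hne
  have hsign : (∀ c ∈ Set.Ioo a b, 0 < g c) ∨ ∀ c ∈ Set.Ioo a b, g c < 0 := by
    by_contra! h
    obtain ⟨⟨c, hc, hgc⟩, d, hd, hgd⟩ := h
    obtain ⟨e, he, hge⟩ := isPreconnected_Ioo.intermediate_value hc hd hg.continuousOn ⟨hgc, hgd⟩
    exact hne e he hge
  rcases hsign with hpos | hneg
  · exact ne_of_hasDerivAt_even_pow_mul_pos hn hf hab hpos heq
  · refine ne_of_hasDerivAt_even_pow_mul_pos (f := fun q => -f q) (g := fun q => -g q) hn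
      (fun q => ?_) hab (fun c hc => neg_pos.2 (hneg c hc)) (by rw [heq])
    rw [mul_neg]
    exact (hf q).fun_neg

/-- For fixed `x`, the trigonometric Lee-Yang polynomial of degree `2 * m` has at most `m` zeros
in `q`. -/
theorem exists_leeYangTrig_ne_zero (x : ℝ) (m : ℕ) (a : Fin (m + 1) → ℝ) (ha : StrictMono a) :
    ∃ i, leeYangTrig (2 * m) (a i) x ≠ 0 := by
  induction m with
  | zero => exact ⟨0, by simp [leeYangTrig]⟩
  | succ m ih =>
    by_contra! hzero
    have hrolle : ∀ i : Fin (m + 1), ∃ c ∈ Set.Ioo (a i.castSucc) (a i.succ),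
        leeYangTrig (2 * m) c x = 0 := by
      intro i
      have hcont : Continuous fun q => leeYangTrig (2 * m) q x :=
        (continuous_leeYangTrig (2 * m)).comp (by fun_prop : Continuous fun q : ℝ => (q, x))
      obtain ⟨c, hc, hc0⟩ := exists_eq_zero_of_hasDerivAt_even_pow_mul (even_two_mul m)
        (f := fun q => leeYangTrig (2 * (m + 1)) q x)
        (g := fun q => (((2 * m : ℕ) : ℝ) + 2) * ((2 * m : ℕ) + 1) * leeYangTrig (2 * m) q x)
        (fun q => (hasDerivAt_leeYangTrig_left (2 * m) q x).congr_deriv (by ring))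
        (continuous_const.mul hcont) (ha i.castSucc_lt_succ) (by rw [hzero, hzero])
      refine ⟨c, hc, ?_⟩
      have : (((2 * m : ℕ) : ℝ) + 2) * ((2 * m : ℕ) + 1) ≠ 0 := by positivity
      exact (mul_eq_zero.1 hc0).resolve_left this
    choose c hc hc0 using hrolle
    have hcmono : StrictMono c := fun i j hij =>
      ((hc i).2.trans_le (ha.monotone (Fin.succ_le_castSucc_iff.2 hij))).trans (hc j).1
    obtain ⟨i, hi⟩ := ih c hcmono
    exact hi (hc0 i)

theorem eventually_mul_neg_of_hasDerivAt {f : ℝ → ℝ} {d x : ℝ} (hf : HasDerivAt f d x)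
    (hx : f x = 0) (hd : d ≠ 0) : ∀ᶠ δ in nhdsWithin 0 (Set.Ioi 0), f (x - δ) * f (x + δ) < 0 := by
  have hslope := hasDerivAt_iff_tendsto_slope_zero.1 hf
  have hright : Filter.Tendsto (fun δ : ℝ => δ) (nhdsWithin 0 (Set.Ioi 0)) (nhdsWithin 0 {0}ᶜ) :=
    Filter.tendsto_id.mono_right (nhdsWithin_mono 0 fun y hy => ne_of_gt hy)
  have hleft : Filter.Tendsto (fun δ : ℝ => -δ) (nhdsWithin 0 (Set.Ioi 0))
      (nhdsWithin 0 {0}ᶜ) := by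
    refine tendsto_nhdsWithin_iff.2 ⟨?_, ?_⟩
    · simpa using (continuous_neg.tendsto (0 : ℝ)).mono_left nhdsWithin_le_nhds
    · filter_upwards [self_mem_nhdsWithin] with y hy
      simpa using ne_of_gt hy
  have hprod := (hslope.comp hleft).mul (hslope.comp hright)
  filter_upwards [hprod.eventually (lt_mem_nhds (mul_self_pos.2 hd)), self_mem_nhdsWithin]
    with δ hδ hpos
  have hpos' : 0 < δ := hpos
  simp only [Function.comp_apply, hx, sub_zero, smul_eq_mul, ← sub_eq_add_neg] at hδ
  have hident : (-δ)⁻¹ * f (x - δ) * (δ⁻¹ * f (x + δ)) =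
      -((δ⁻¹) ^ 2 * (f (x - δ) * f (x + δ))) := by
    rw [inv_neg]; ring
  rw [hident, Left.neg_pos_iff] at hδ
  exact (pos_iff_neg_of_mul_neg hδ).1 (by positivity)

/-- `X q` enumerates increasingly the zeros of `leeYangTrig (2 * m) q` in `(0, π / 2)`. -/
def IsZeroFamily (m : ℕ) (X : ℝ → Fin m → ℝ) : Prop :=
  ∀ q, |q| < 1 → StrictMono (X q) ∧
    ∀ x, (x ∈ Set.Ioo 0 (π / 2) ∧ leeYangTrig (2 * m) q x = 0) ↔ ∃ j, X q j = x

theorem exists_isZeroFamily (m : ℕ) : ∃ X, IsZeroFamily m X := by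
  have h : ∀ q : ℝ, ∃ Y : Fin m → ℝ, |q| < 1 → StrictMono Y ∧
      ∀ x, (x ∈ Set.Ioo 0 (π / 2) ∧ leeYangTrig (2 * m) q x = 0) ↔ ∃ j, Y j = x := by
    intro q
    by_cases hq : |q| < 1
    · obtain ⟨s, hcard, hs⟩ := exists_finset_leeYangTrig_zeros (m := m) hq
      refine ⟨s.orderEmbOfFin hcard, fun _ => ⟨(s.orderEmbOfFin hcard).strictMono, fun x => ?_⟩⟩
      rw [← hs, ← Set.mem_range, Finset.range_orderEmbOfFin, Finset.mem_coe]
    · exact ⟨fun _ => 0, fun h => absurd h hq⟩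
  choose X hX using h
  exact ⟨X, hX⟩

theorem continuous_leeYangTrig_left (n : ℕ) (x : ℝ) : Continuous fun q => leeYangTrig n q x :=
  (continuous_leeYangTrig n).comp (by fun_prop : Continuous fun q : ℝ => (q, x))

theorem continuous_leeYangTrig_right (n : ℕ) (q : ℝ) : Continuous (leeYangTrig n q) :=
  (continuous_leeYangTrig n).comp (by fun_prop : Continuous fun x : ℝ => (q, x))

theorem eventually_abs_lt_one {q : ℝ} (hq : |q| < 1) : ∀ᶠ r in nhds q, |r| < 1 :=
  continuous_abs.continuousAt.eventually (gt_mem_nhds hq)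

theorem eventually_forall_leeYangTrig_ne_zero {n : ℕ} {q : ℝ} {K : Set ℝ} (hK : IsCompact K)
    (h : ∀ x ∈ K, leeYangTrig n q x ≠ 0) :
    ∀ᶠ r in nhds q, ∀ x ∈ K, leeYangTrig n r x ≠ 0 :=
  hK.eventually_forall_of_forall_eventually fun x hx =>
    (continuous_leeYangTrig n).continuousAt.eventually_ne (h x hx)

theorem leeYangTrig_one_ne_zero (n : ℕ) {x : ℝ} (hx : x ∈ Set.Ico 0 (π / 2)) :
    leeYangTrig n 1 x ≠ 0 := by
  rw [Ne, leeYangTrig_eq_zero_iff]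
  have heval : ∀ z : ℂ, (leeYang n 1).eval z = (z + 1) ^ n := fun z => by
    rw [leeYang_eval, add_pow]
    exact Finset.sum_congr rfl fun k _ => by simp [mul_comm]
  rw [heval]
  refine pow_ne_zero n fun h => ?_
  have hre := congrArg Complex.re h
  rw [show (2 * x * Complex.I : ℂ) = (2 * x : ℝ) * Complex.I by push_cast; rfl,
    Complex.add_re, Complex.exp_ofReal_mul_I_re, Complex.one_re, Complex.zero_re] at hre
  have := Real.cos_lt_cos_of_nonneg_of_le_pi (x := 2 * x) (by linarith [hx.1]) le_rfl
    (by linarith [hx.2])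
  rw [Real.cos_pi] at this
  linarith

theorem leeYangTrig_neg_one_ne_zero (m : ℕ) {x : ℝ} (hx : x ∈ Set.Ioc 0 (π / 2)) :
    leeYangTrig (2 * m) (-1) x ≠ 0 := by
  rw [Ne, leeYangTrig_eq_zero_iff]
  have heval : ∀ z : ℂ, (leeYang (2 * m) (-1)).eval z = (-z + 1) ^ (2 * m) := fun z => by
    rw [leeYang_eval, add_pow]
    refine Finset.sum_congr rfl fun k hk => ?_
    have hk' : k ≤ 2 * m := by simpa [Nat.lt_succ_iff] using hk
    have hpar : ((-1 : ℝ) : ℂ) ^ (k * (2 * m - k)) = (-1) ^ k := by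
      rw [Complex.ofReal_neg, Complex.ofReal_one]
      rcases Nat.even_or_odd k with hk2 | hk2
      · rw [hk2.neg_one_pow, (hk2.mul_right _).neg_one_pow]
      · rw [hk2.neg_one_pow,
          (hk2.mul (Nat.Even.sub_odd hk' (even_two_mul m) hk2)).neg_one_pow]
    rw [hpar, neg_pow z k]
    simp [mul_comm, mul_assoc]
  rw [heval]
  refine pow_ne_zero (2 * m) fun h => ?_
  have hre := congrArg Complex.re h
  rw [show (2 * x * Complex.I : ℂ) = (2 * x : ℝ) * Complex.I by push_cast; rfl,
    Complex.add_re, Complex.neg_re, Complex.exp_ofReal_mul_I_re, Complex.one_re,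
    Complex.zero_re] at hre
  have := Real.cos_lt_cos_of_nonneg_of_le_pi (y := 2 * x) le_rfl (by linarith [hx.2])
    (by linarith [hx.1])
  rw [Real.cos_zero] at this
  linarith

namespace IsZeroFamily

variable {m : ℕ} {X : ℝ → Fin m → ℝ}

theorem mem_Ioo (hX : IsZeroFamily m X) {q : ℝ} (hq : |q| < 1) (j : Fin m) :
    X q j ∈ Set.Ioo 0 (π / 2) :=
  (((hX q hq).2 (X q j)).2 ⟨j, rfl⟩).1

theorem eq_zero (hX : IsZeroFamily m X) {q : ℝ} (hq : |q| < 1) (j : Fin m) :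
    leeYangTrig (2 * m) q (X q j) = 0 :=
  (((hX q hq).2 (X q j)).2 ⟨j, rfl⟩).2

theorem eq_of_strictMono (hX : IsZeroFamily m X) {q : ℝ} (hq : |q| < 1) {y : Fin m → ℝ}
    (hy : StrictMono y) (hmem : ∀ j, y j ∈ Set.Ioo 0 (π / 2))
    (hzero : ∀ j, leeYangTrig (2 * m) q (y j) = 0) : y = X q := by
  have hinj := (hX q hq).1.injective
  have hcard : (Finset.univ.image (X q)).card = m := by
    rw [Finset.card_image_of_injective _ hinj, Finset.card_univ, Fintype.card_fin]
  rw [Finset.orderEmbOfFin_unique hcard (f := y) (fun j => ?_) hy,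
    ← Finset.orderEmbOfFin_unique hcard (f := X q) (fun j => by simp) (hX q hq).1]
  obtain ⟨i, hi⟩ := ((hX q hq).2 (y j)).1 ⟨hmem j, hzero j⟩
  rw [← hi]
  simp

theorem continuousAt (hX : IsZeroFamily m X) {q : ℝ} (hq : |q| < 1) (j : Fin m) :
    ContinuousAt (fun r => X r j) q := by
  rw [Metric.continuousAt_iff']
  intro ε hε
  have hsmall : ∀ c : ℝ, 0 < c → ∀ᶠ δ in nhdsWithin (0 : ℝ) (Set.Ioi 0), δ < c := fun c hc =>
    (gt_mem_nhds hc).filter_mono nhdsWithin_le_nhds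
  obtain ⟨δ, hδ0, hδε, hδleft, hδright, hδsep, hδsign⟩ : ∃ δ : ℝ, 0 < δ ∧ δ < ε ∧
      (∀ i, δ < X q i) ∧ (∀ i, δ < π / 2 - X q i) ∧
      (∀ i k, i < k → δ < (X q k - X q i) / 2) ∧
      ∀ i, leeYangTrig (2 * m) q (X q i - δ) * leeYangTrig (2 * m) q (X q i + δ) < 0 := by
    have hsep : ∀ i k : Fin m, ∀ᶠ δ in nhdsWithin (0 : ℝ) (Set.Ioi 0),
        i < k → δ < (X q k - X q i) / 2 := fun i k => by
      by_cases hik : i < k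
      · filter_upwards [hsmall _ (half_pos (sub_pos.2 ((hX q hq).1 hik)))] with δ hδ _ using hδ
      · exact Filter.Eventually.of_forall fun δ h => absurd h hik
    have hsign : ∀ i : Fin m, ∀ᶠ δ in nhdsWithin (0 : ℝ) (Set.Ioi 0),
        leeYangTrig (2 * m) q (X q i - δ) * leeYangTrig (2 * m) q (X q i + δ) < 0 := fun i => by
      obtain ⟨d, hd, hderiv⟩ := exists_hasDerivAt_leeYangTrig_right hq (hX.eq_zero hq i)
      exact eventually_mul_neg_of_hasDerivAt hderiv (hX.eq_zero hq i) hd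
    have hall := (self_mem_nhdsWithin : Set.Ioi (0 : ℝ) ∈ nhdsWithin 0 (Set.Ioi 0))
    exact ((Filter.eventually_of_mem hall fun δ (hδ : 0 < δ) => hδ).and <| (hsmall ε hε).and <|
      (Filter.eventually_all.2 fun i => hsmall _ (hX.mem_Ioo hq i).1).and <|
      (Filter.eventually_all.2 fun i => hsmall _ (sub_pos.2 (hX.mem_Ioo hq i).2)).and <|
      (Filter.eventually_all.2 fun i => Filter.eventually_all.2 (hsep i)).and <|
      Filter.eventually_all.2 hsign).exists
  have hnear : ∀ᶠ r in nhds q, ∀ i,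
      leeYangTrig (2 * m) r (X q i - δ) * leeYangTrig (2 * m) r (X q i + δ) < 0 :=
    Filter.eventually_all.2 fun i =>
      ((continuous_leeYangTrig_left (2 * m) (X q i - δ)).mul
        (continuous_leeYangTrig_left (2 * m) (X q i + δ))).continuousAt.eventually
          (gt_mem_nhds (hδsign i))
  filter_upwards [hnear, eventually_abs_lt_one hq] with r hr hr1
  have hzero : ∀ i, ∃ y ∈ Set.Ioo (X q i - δ) (X q i + δ), leeYangTrig (2 * m) r y = 0 := fun i =>
    exists_Ioo_eq_zero_of_mul_neg (continuous_leeYangTrig_right _ r) (by linarith) (hr i)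
  choose y hy hy0 using hzero
  have hmono : StrictMono y := fun i k hik => by
    linarith [(hy i).2, (hy k).1, hδsep i k hik]
  have heq := hX.eq_of_strictMono hr1 hmono (fun i => ⟨by linarith [(hy i).1, hδleft i],
    by linarith [(hy i).2, hδright i]⟩) hy0
  rw [← heq, Real.dist_eq, abs_lt]
  constructor <;> linarith [(hy j).1, (hy j).2]

theorem tendsto_one (hX : IsZeroFamily m X) (j : Fin m) :
    Filter.Tendsto (fun q => X q j) (nhdsWithin 1 (Set.Ioo (-1) 1)) (nhds (π / 2)) := by
  rw [tendsto_order]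
  refine ⟨fun a ha => ?_, fun a ha => ?_⟩
  · have hne := eventually_forall_leeYangTrig_ne_zero (n := 2 * m) (q := 1)
        (isCompact_Icc (a := 0) (b := a))
      fun x hx => leeYangTrig_one_ne_zero _ ⟨hx.1, hx.2.trans_lt ha⟩
    filter_upwards [hne.filter_mono nhdsWithin_le_nhds, self_mem_nhdsWithin] with q hq hq1
    have hq1 := abs_lt.2 hq1
    by_contra! h
    exact hq _ ⟨(hX.mem_Ioo hq1 j).1.le, h⟩ (hX.eq_zero hq1 j)
  · filter_upwards [self_mem_nhdsWithin] with q hq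
    exact (hX.mem_Ioo (abs_lt.2 hq) j).2.trans ha

theorem tendsto_neg_one (hX : IsZeroFamily m X) (j : Fin m) :
    Filter.Tendsto (fun q => X q j) (nhdsWithin (-1) (Set.Ioo (-1) 1)) (nhds 0) := by
  rw [tendsto_order]
  refine ⟨fun a ha => ?_, fun a ha => ?_⟩
  · filter_upwards [self_mem_nhdsWithin] with q hq
    exact ha.trans (hX.mem_Ioo (abs_lt.2 hq) j).1
  · have hne := eventually_forall_leeYangTrig_ne_zero (n := 2 * m) (q := -1)
      (isCompact_Icc (a := a) (b := π / 2))
      fun x hx => leeYangTrig_neg_one_ne_zero _ ⟨ha.trans_le hx.1, hx.2⟩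
    filter_upwards [hne.filter_mono nhdsWithin_le_nhds, self_mem_nhdsWithin] with q hq hq1
    have hq1 := abs_lt.2 hq1
    by_contra! h
    exact hq _ ⟨h, (hX.mem_Ioo hq1 j).2.le⟩ (hX.eq_zero hq1 j)

theorem continuousOn (hX : IsZeroFamily m X) (j : Fin m) :
    ContinuousOn (fun q => X q j) (Set.Ioo (-1) 1) := fun _ hq =>
  (hX.continuousAt (abs_lt.2 hq) j).continuousWithinAt

theorem exists_eq (hX : IsZeroFamily m X) (j : Fin m) {x : ℝ} (hx : x ∈ Set.Ioo 0 (π / 2)) :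
    ∃ q, |q| < 1 ∧ X q j = x := by
  have : (nhdsWithin (-1 : ℝ) (Set.Ioo (-1) 1)).NeBot := by
    rw [nhdsWithin_Ioo_eq_nhdsGT (by norm_num)]; infer_instance
  have : (nhdsWithin (1 : ℝ) (Set.Ioo (-1) 1)).NeBot := by
    rw [nhdsWithin_Ioo_eq_nhdsLT (by norm_num)]; infer_instance
  obtain ⟨q, hq, hqx⟩ := isPreconnected_Ioo.intermediate_value_Ioo
    (Filter.le_principal_iff.2 self_mem_nhdsWithin) (Filter.le_principal_iff.2 self_mem_nhdsWithin)
    (hX.continuousOn j) (hX.tendsto_neg_one j) (hX.tendsto_one j) hx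
  exact ⟨q, abs_lt.2 hq, hqx⟩

theorem injOn (hX : IsZeroFamily m X) (j : Fin m) :
    Set.InjOn (fun q => X q j) (Set.Ioo (-1) 1) := by
  intro a ha b hb hab
  by_contra hne
  simp only at hab
  rw [Set.mem_Ioo, ← abs_lt] at ha hb
  have hlevel : ∀ i, ∃ q, |q| < 1 ∧ X q i = X a j ∧ (i = j → q = a) := fun i => by
    by_cases hij : i = j
    · exact ⟨a, ha, by rw [hij], fun _ => rfl⟩
    · obtain ⟨q, hq, hqx⟩ := hX.exists_eq i (hX.mem_Ioo ha j)
      exact ⟨q, hq, hqx, fun h => absurd h hij⟩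
  choose Q hQ hQx hQj using hlevel
  have hinj : Function.Injective Q := fun i k hik =>
    (hX _ (hQ i)).1.injective (by rw [hQx, hik, hQx])
  have hb_notMem : b ∉ Finset.univ.image Q := by
    intro h
    obtain ⟨i, -, hi⟩ := Finset.mem_image.1 h
    have hij : i = j := (hX b hb).1.injective (by rw [← hab, ← hQx i, hi])
    exact hne (by rw [← hi, hQj i hij])
  have hcard : (insert b (Finset.univ.image Q)).card = m + 1 := by
    rw [Finset.card_insert_of_notMem hb_notMem, Finset.card_image_of_injective _ hinj,
      Finset.card_univ, Fintype.card_fin]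
  obtain ⟨i, hi⟩ := exists_leeYangTrig_ne_zero (X a j) m _
    ((insert b (Finset.univ.image Q)).orderEmbOfFin hcard).strictMono
  refine hi ?_
  have hmem := Finset.orderEmbOfFin_mem _ hcard i
  rcases Finset.mem_insert.1 hmem with h | h
  · rw [h, hab, hX.eq_zero hb]
  · obtain ⟨k, -, hk⟩ := Finset.mem_image.1 h
    rw [← hk, ← hQx k, hX.eq_zero (hQ k)]

theorem strictMonoOn (hX : IsZeroFamily m X) (j : Fin m) :
    StrictMonoOn (fun q => X q j) (Set.Ioo (-1) 1) := by
  refine (ContinuousOn.strictMonoOn_of_injOn_Ioo (by norm_num) (hX.continuousOn j)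
    (hX.injOn j)).resolve_right fun hanti => ?_
  have h0 : |(0 : ℝ)| < 1 := by simp
  have hlim := (hX.tendsto_one j).eventually (lt_mem_nhds (hX.mem_Ioo h0 j).2)
  have : (nhdsWithin (1 : ℝ) (Set.Ioo (-1) 1)).NeBot := by
    rw [nhdsWithin_Ioo_eq_nhdsLT (by norm_num)]; infer_instance
  obtain ⟨q, ⟨hq, hq1⟩, hq0⟩ := ((hlim.and self_mem_nhdsWithin).and
    ((lt_mem_nhds (zero_lt_one' ℝ)).filter_mono nhdsWithin_le_nhds)).exists
  exact lt_asymm hq (hanti (abs_lt.1 h0) hq1 hq0)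

theorem apply_zero (hX : IsZeroFamily m X) (j : Fin m) :
    X 0 j = (2 * (j : ℝ) + 1) * π / (2 * (2 * m : ℕ)) := by
  have hm : (0 : ℝ) < m := by exact_mod_cast j.pos
  have hm2 : (0 : ℝ) < (2 * m : ℕ) := by push_cast; positivity
  have h0 : |(0 : ℝ)| < 1 := by simp
  refine (congrFun (hX.eq_of_strictMono h0
    (y := fun j => (2 * (j : ℝ) + 1) * π / (2 * (2 * m : ℕ))) ?_ ?_ ?_) j).symm
  · intro i k hik
    have : (i : ℝ) < k := by exact_mod_cast hik
    dsimp only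
    gcongr
  · intro i
    have hi : (i : ℝ) + 1 ≤ m := by exact_mod_cast i.2
    refine ⟨by positivity, ?_⟩
    push_cast
    rw [div_lt_div_iff₀ (by positivity) (by positivity)]
    nlinarith [Real.pi_pos]
  · intro i
    rw [leeYangTrig_eq_zero_iff, leeYang_zero_eval (by have := i.pos; lia), ← Complex.exp_nat_mul]
    have harg : ((2 * m : ℕ) : ℂ) * (2 * (((2 * (i : ℝ) + 1) * π / (2 * (2 * m : ℕ)) : ℝ) : ℂ)
        * Complex.I) = π * Complex.I + (i : ℕ) * (2 * π * Complex.I) := by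
      have : (m : ℂ) ≠ 0 := by exact_mod_cast hm.ne'
      push_cast
      field_simp
      ring
    rw [harg, Complex.exp_add, Complex.exp_nat_mul_two_pi_mul_I, Complex.exp_pi_mul_I]
    norm_num

end IsZeroFamily

theorem sum_spin {n : ℕ} (σ : Fin n → Bool) :
    ∑ j, spin (σ j) = 2 * ((Finset.univ.filter fun j => σ j = true).card : ℝ) - n := by
  have h : ∀ j, spin (σ j) = 2 * (if σ j = true then 1 else 0) - 1 := fun j => by
    unfold spin; split_ifs <;> norm_num
  simp only [h, Finset.sum_sub_distrib, ← Finset.mul_sum, Finset.sum_boole]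
  simp

theorem CWZ_eq (n : ℕ) (t x : ℝ) :
    CWZ n t x = Real.exp (t * n ^ 2) * leeYangTrig n (Real.exp (-4 * t)) x := by
  have hgroup : CWZ n t x = ∑ k ∈ range (n + 1), (n.choose k : ℂ) *
      Complex.exp (t * ((2 * k - n : ℝ) : ℂ) ^ 2 + Complex.I * x * ((2 * k - n : ℝ) : ℂ)) := by
    have hpow := Finset.sum_powerset_apply_card (fun k : ℕ =>
      Complex.exp (t * ((2 * k - n : ℝ) : ℂ) ^ 2 + Complex.I * x * ((2 * k - n : ℝ) : ℂ)))
      (x := (Finset.univ : Finset (Fin n)))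
    simp only [Finset.card_univ, Fintype.card_fin, Finset.powerset_univ, nsmul_eq_mul] at hpow
    rw [← hpow, CWZ]
    refine Finset.sum_bij' (fun σ _ => Finset.univ.filter fun j => σ j = true)
      (fun s _ j => decide (j ∈ s)) (by simp) (by simp) (by simp) (by simp) fun σ _ => ?_
    rw [sum_spin]
  rw [hgroup, leeYangTrig_eq, leeYang_eval, Finset.mul_sum, Finset.mul_sum]
  refine Finset.sum_congr rfl fun k hk => ?_
  have hk' : k ≤ n := by simpa [Nat.lt_succ_iff] using hk
  rw [Complex.ofReal_exp, Complex.ofReal_exp, ← Complex.exp_nat_mul, ← Complex.exp_nat_mul,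
    mul_assoc (n.choose k : ℂ), ← Complex.exp_add, mul_left_comm (Complex.exp (-_)),
    mul_left_comm (Complex.exp _) (n.choose k : ℂ), ← Complex.exp_add, ← Complex.exp_add]
  congr 2
  push_cast [hk']
  ring

theorem CWZ_eq_zero_iff {n : ℕ} {t x : ℝ} :
    CWZ n t x = 0 ↔ leeYangTrig n (Real.exp (-4 * t)) x = 0 := by
  rw [CWZ_eq]
  simp

theorem stmt12 (n : ℕ) (hn : 0 < n) (heven : Even n) :
    ∃ x : ℕ → ℝ → ℝ,
      (∀ k ∈ Finset.Icc 1 (n / 2), ContinuousOn (x k) (Set.Ici 0)) ∧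
      (∀ k ∈ Finset.Icc 1 (n / 2), x k 0 = π / 2) ∧
      (∀ t : ℝ, 0 < t →
        (∀ k ∈ Finset.Icc 1 (n / 2), 0 < x k t ∧ x k t < π / 2) ∧
        (∀ k, 1 ≤ k → k < n / 2 → x k t < x (k + 1) t) ∧
        {z : ℝ | z ∈ Set.Ioc 0 (π / 2) ∧ CWZ n t z = 0}
          = (fun k => x k t) '' Set.Icc 1 (n / 2)) ∧
      (∀ k ∈ Finset.Icc 1 (n / 2),
        StrictAntiOn (x k) (Set.Ici 0) ∧
        Filter.Tendsto (x k) Filter.atTop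
          (nhds ((2 * (k : ℝ) - 1) * π / (2 * (n : ℝ))))) := by
  obtain ⟨m, rfl⟩ := heven.two_dvd
  rw [Nat.mul_div_cancel_left m two_pos]
  obtain ⟨X, hX⟩ := exists_isZeroFamily m
  have hexp : ∀ t : ℝ, 0 < t → |Real.exp (-4 * t)| < 1 := fun t ht => by
    rw [abs_of_pos (Real.exp_pos _), Real.exp_lt_one_iff]
    linarith
  have hexp' : ∀ t : ℝ, 0 < t → Real.exp (-4 * t) ∈ Set.Ioo (-1 : ℝ) 1 := fun t ht =>
    abs_lt.1 (hexp t ht)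
  let x : ℕ → ℝ → ℝ := fun k t =>
    if h : k - 1 < m ∧ 0 < t then X (Real.exp (-4 * t)) ⟨k - 1, h.1⟩ else π / 2
  have hx : ∀ (j : Fin m) (t : ℝ), 0 < t → x (j + 1) t = X (Real.exp (-4 * t)) j := fun j t ht => by
    simp [x, ht]
  have hx0 : ∀ k, x k 0 = π / 2 := fun k => by simp [x]
  have hindex : ∀ k ∈ Finset.Icc 1 m, ∃ j : Fin m, k = j + 1 := fun k hk => by
    rw [Finset.mem_Icc] at hk
    exact ⟨⟨k - 1, by lia⟩, by simp only; lia⟩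
  have hcontExp : Continuous fun t : ℝ => Real.exp (-4 * t) := by fun_prop
  refine ⟨x, fun k hk => ?_, fun k _ => hx0 k, fun t ht => ⟨fun k hk => ?_, fun k hk1 hk => ?_, ?_⟩,
    fun k hk => ⟨?_, ?_⟩⟩
  · obtain ⟨j, rfl⟩ := hindex k hk
    intro t ht
    rcases (Set.mem_Ici.1 ht).eq_or_lt with rfl | ht
    · rw [← continuousWithinAt_Ioi_iff_Ici, ContinuousWithinAt, hx0]
      have hlim : Filter.Tendsto (fun t : ℝ => Real.exp (-4 * t)) (nhdsWithin 0 (Set.Ioi 0))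
          (nhdsWithin 1 (Set.Ioo (-1) 1)) := by
        refine tendsto_nhdsWithin_iff.2 ⟨?_, ?_⟩
        · simpa using (hcontExp.tendsto 0).mono_left nhdsWithin_le_nhds
        · filter_upwards [self_mem_nhdsWithin] with t ht using hexp' t ht
      refine ((hX.tendsto_one j).comp hlim).congr' ?_
      filter_upwards [self_mem_nhdsWithin] with t ht using (hx j t ht).symm
    · refine ContinuousAt.continuousWithinAt ?_
      have hcomp := ContinuousAt.comp (f := fun t : ℝ => Real.exp (-4 * t))
        (hX.continuousAt (hexp t ht) j) hcontExp.continuousAt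
      refine hcomp.congr ?_
      filter_upwards [lt_mem_nhds ht] with s hs using (hx j s hs).symm
  · obtain ⟨j, rfl⟩ := hindex k hk
    rw [hx j t ht]
    exact hX.mem_Ioo (hexp t ht) j
  · obtain ⟨j, rfl⟩ := hindex k (Finset.mem_Icc.2 ⟨hk1, hk.le⟩)
    rw [hx j t ht, hx ⟨j + 1, hk⟩ t ht]
    exact (hX _ (hexp t ht)).1 (Fin.mk_lt_mk.2 (Nat.lt_succ_self j))
  · ext z
    have hpi : CWZ (2 * m) t (π / 2 : ℝ) ≠ 0 := by
      rw [Ne, CWZ_eq_zero_iff]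
      simpa using leeYangTrig_int_mul_pi_div_two_ne_zero (m := m) (hexp t ht) 1
    constructor
    · rintro ⟨hz, hz0⟩
      have hlt : z < π / 2 := lt_of_le_of_ne hz.2 fun h => hpi (h ▸ hz0)
      obtain ⟨j, hj⟩ := ((hX _ (hexp t ht)).2 z).1 ⟨⟨hz.1, hlt⟩, CWZ_eq_zero_iff.1 hz0⟩
      exact ⟨j + 1, ⟨by lia, j.2⟩, (hx j t ht).trans hj⟩
    · rintro ⟨k, hk, rfl⟩
      obtain ⟨j, rfl⟩ := hindex k (Finset.mem_Icc.2 hk)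
      simp only [hx j t ht]
      exact ⟨Set.Ioo_subset_Ioc_self (hX.mem_Ioo (hexp t ht) j),
        CWZ_eq_zero_iff.2 (hX.eq_zero (hexp t ht) j)⟩
  · obtain ⟨j, rfl⟩ := hindex k hk
    intro s hs t _ hst
    have ht : 0 < t := (Set.mem_Ici.1 hs).trans_lt hst
    rw [hx j t ht]
    rcases (Set.mem_Ici.1 hs).eq_or_lt with rfl | hs
    · rw [hx0]
      exact (hX.mem_Ioo (hexp t ht) j).2
    · rw [hx j s hs]
      exact hX.strictMonoOn j (hexp' t ht) (hexp' s hs) (Real.exp_lt_exp.2 (by linarith))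
  · obtain ⟨j, rfl⟩ := hindex k hk
    have hlim : Filter.Tendsto (fun t : ℝ => Real.exp (-4 * t)) Filter.atTop (nhds 0) :=
      Real.tendsto_exp_atBot.comp
        (Filter.tendsto_id.const_mul_atTop_of_neg (by norm_num : (-4 : ℝ) < 0))
    have hval : (2 * ((j + 1 : ℕ) : ℝ) - 1) * π / (2 * (2 * m : ℕ)) = X 0 j := by
      rw [hX.apply_zero j]
      push_cast
      ring
    rw [hval]
    refine ((hX.continuousAt (by simp) j).tendsto.comp hlim).congr' ?_
    filter_upwards [Filter.eventually_gt_atTop 0] with t ht using (hx j t ht).symm
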